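/- Let n and x be real numbers and let k be an integer with k ≥ 1. Then Σ_{r=1}^{k} binom(n, r) · ( Σ_{(s_1,…,s_r)∈T(r,k)} binom(x, s_1)⋯binom(x, s_r) ) = Σ_{i=1}^{k} (−1)^{k−i} · binom(n, i) · binom(n−i−1, k−i) · binom(i·x, k). (In the paper x = ν^{-1}; this is the closed formula for the coefficients λ_n^k, after cancelling the common factor (ν/s)^k.) -/

import Mathlib

noncomputable section

open scoped Classical

/-- The generalized binomial coefficient `a (a-1) ⋯ (a-k+1) / k!` in a field `K`
(of characteristic zero in all uses). -/
def gbinom {K : Type*} [Field K] (a : K) (k : ℕ) : K :=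
  (∏ i ∈ Finset.range k, (a - (i : K))) / (k.factorial : K)

/-- `Tsum x i l = Σ_{(j₁,…,j_i) ∈ T(i,l)} binom(x,j₁)⋯binom(x,j_i)`, the sum over all
`i`-tuples of positive integers with sum `l` (a finitely supported sum). -/
def Tsum (x : ℝ) (i l : ℕ) : ℝ :=
  ∑ᶠ c : Fin i → ℕ,
    if (∀ t, 1 ≤ c t) ∧ (∑ t, c t) = l then ∏ t, gbinom x (c t) else 0

end

lemma gbinom_eq (a : ℝ) (k : ℕ) : gbinom a k = Ring.choose a k := by
  rw [Ring.choose_eq_smul, gbinom, ← Polynomial.aeval_eq_smeval, Polynomial.aeval_def,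
    Polynomial.eval₂_eq_eval_map, descPochhammer_map, descPochhammer_eval_eq_prod_range,
    smul_eq_mul, div_eq_inv_mul]

lemma alt_sum (a : ℝ) (m : ℕ) :
    ∑ j ∈ Finset.range (m + 1), (-1 : ℝ) ^ j * Ring.choose a j
      = (-1) ^ m * Ring.choose (a - 1) m := by
  induction m with
  | zero => simp
  | succ m ih =>
    rw [Finset.sum_range_succ, ih]
    have := Ring.choose_succ_succ (a - 1) m
    rw [sub_add_cancel] at this
    rw [this]
    ring

lemma binpow (x : ℝ) (i : ℕ) :
    (PowerSeries.binomialSeries ℝ x) ^ i = PowerSeries.binomialSeries ℝ ((i : ℝ) * x) := by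
  induction i with
  | zero => simp [PowerSeries.binomialSeries_zero]
  | succ i ih =>
    rw [pow_succ, ih, ← PowerSeries.binomialSeries_add]
    push_cast
    ring_nf

lemma Tsum_eq (x : ℝ) (r k : ℕ) :
    Tsum x r k = PowerSeries.coeff k ((PowerSeries.binomialSeries ℝ x - 1) ^ r) := by
  have hp : (PowerSeries.binomialSeries ℝ x - 1) ^ r
      = ∏ _t : Fin r, (PowerSeries.binomialSeries ℝ x - 1) := by simp
  rw [hp, PowerSeries.coeff_prod, Tsum]
  have hc : ∀ j, PowerSeries.coeff j (PowerSeries.binomialSeries ℝ x - 1)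
      = if 1 ≤ j then gbinom x j else 0 := by
    intro j
    rw [gbinom_eq, map_sub, PowerSeries.binomialSeries_coeff, PowerSeries.coeff_one]
    rcases j with _ | j <;> simp
  simp only [hc]
  rw [finsum_eq_finsetSum_of_support_subset (s := Finset.piAntidiag Finset.univ k)]
  · symm
    refine Finset.sum_bij (fun l _ => ⇑l) ?_ (fun _ _ _ _ h => DFunLike.coe_injective h) ?_ ?_
    · intro l hl
      simpa using (Finset.mem_finsuppAntidiag.1 hl).1
    · intro c hc
      refine ⟨Finsupp.equivFunOnFinite.symm c, ?_, rfl⟩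
      rw [Finset.mem_finsuppAntidiag]
      exact ⟨(Finset.mem_piAntidiag.1 hc).1, Finset.subset_univ _⟩
    intro l hl
    symm
    have hl := (Finset.mem_finsuppAntidiag.1 hl).1
    by_cases h : ∀ t, 1 ≤ l t
    · rw [if_pos ⟨h, hl⟩]
      exact Finset.prod_congr rfl fun t _ => by rw [if_pos (h t)]
    · rw [if_neg (fun h' => h h'.1)]
      push Not at h
      obtain ⟨t, ht⟩ := h
      exact (Finset.prod_eq_zero (Finset.mem_univ t) (by rw [if_neg (by omega)])).symm
  · intro c hc
    simp only [Function.mem_support, ne_eq, ite_eq_right_iff, not_forall] at hc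
    obtain ⟨h, _⟩ := hc
    simpa using h.2

lemma Tsum_eq' (x : ℝ) (r k : ℕ) :
    Tsum x r k = ∑ i ∈ Finset.range (r + 1),
      (-1 : ℝ) ^ (r - i) * (r.choose i : ℝ) * Ring.choose ((i : ℝ) * x) k := by
  rw [Tsum_eq, sub_eq_add_neg, add_pow, map_sum]
  refine Finset.sum_congr rfl fun i _ => ?_
  have : PowerSeries.binomialSeries ℝ x ^ i * (-1) ^ (r - i) * ((r.choose i : ℕ) : PowerSeries ℝ)
      = PowerSeries.C ((-1 : ℝ) ^ (r - i) * (r.choose i : ℝ)) *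
        PowerSeries.binomialSeries ℝ ((i : ℝ) * x) := by
    rw [binpow]; simp; ring
  rw [this, PowerSeries.coeff_C_mul, PowerSeries.binomialSeries_coeff, smul_eq_mul, mul_one]

theorem lambda_coefficient_formula (n x : ℝ) (k : ℕ) (hk : 1 ≤ k) :
    ∑ r ∈ Finset.Icc 1 k, gbinom n r * Tsum x r k =
      ∑ i ∈ Finset.Icc 1 k,
        (-1 : ℝ) ^ (k - i) * gbinom n i * gbinom (n - i - 1) (k - i) * gbinom ((i : ℝ) * x) k := by
  simp only [gbinom_eq, Tsum_eq', Finset.mul_sum]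
  have h1 : ∀ r ∈ Finset.Icc 1 k, ∑ i ∈ Finset.range (r + 1), Ring.choose n r *
      ((-1 : ℝ) ^ (r - i) * (r.choose i : ℝ) * Ring.choose ((i : ℝ) * x) k)
      = ∑ i ∈ Finset.Icc 1 r, Ring.choose n r *
      ((-1 : ℝ) ^ (r - i) * (r.choose i : ℝ) * Ring.choose ((i : ℝ) * x) k) := by
    intro r _
    symm
    apply Finset.sum_subset
    · intro i hi; rw [Finset.mem_Icc] at hi; rw [Finset.mem_range]; omega
    · intro i hi hi'
      have : i = 0 := by simp at hi hi'; omega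
      subst this
      simp [Ring.choose_zero_pos ℝ (by omega : 0 < k)]
  rw [Finset.sum_congr rfl h1, Finset.sum_comm' (t' := Finset.Icc 1 k) (s' := fun i => Finset.Icc i k)
    (by intro r i; simp; omega)]
  refine Finset.sum_congr rfl fun i hi => ?_
  have hik : i ≤ k := (Finset.mem_Icc.1 hi).2
  have h2 := alt_sum (n - i) (k - i)
  rw [show (-1 : ℝ) ^ (k - i) * Ring.choose n i * Ring.choose (n - i - 1) (k - i) *
    Ring.choose ((i : ℝ) * x) k = Ring.choose n i * Ring.choose ((i : ℝ) * x) k *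
      ((-1 : ℝ) ^ (k - i) * Ring.choose (n - i - 1) (k - i)) by ring, ← h2, Finset.mul_sum]
  rw [← Finset.Ico_add_one_right_eq_Icc, Finset.sum_Ico_eq_sum_range,
    show k + 1 - i = k - i + 1 by omega]
  refine Finset.sum_congr rfl fun j _ => ?_
  have h3 := Ring.choose_smul_choose n (n := i + j) (k := i) (by omega)
  rw [nsmul_eq_mul] at h3
  simp only [Nat.add_sub_cancel_left] at h3 ⊢
  linear_combination ((-1 : ℝ) ^ j * Ring.choose ((i : ℝ) * x) k) * h3
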